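/- Let (A,Λ) be an associative form ring with 1, n ≥ 3, and let (I,Γ), (J,Δ) be form ideals of (A,Λ). For any i ≠ ±j, any a ∈ I, b ∈ J, and any x ∈ EU(2n,A,Λ), one has x·Y_ij(a,b)·x⁻¹ ≡ Y_ij(a,b) modulo EU(2n,(I,Γ)∘(J,Δ)), i.e. x·Y_ij(a,b)·x⁻¹·Y_ij(a,b)⁻¹ ∈ EU(2n,(I,Γ)∘(J,Δ)). -/

import Mathlib

open Matrix
open scoped commutatorElement

/-- Bak's form ring data on a ring `A`: an involution `bar`, a central symmetry
`λ` with `λ λ̄ = 1`, and a form parameter `Λ`. -/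
structure FormRingData (A : Type*) [Ring A] where
  bar : A →+ A
  bar_mul : ∀ a b : A, bar (a * b) = bar b * bar a
  bar_bar : ∀ a : A, bar (bar a) = a
  lam : A
  lam_comm : ∀ a : A, lam * a = a * lam
  lam_bar : lam * bar lam = 1
  Lambda : AddSubgroup A
  lambdaMin_mem : ∀ c : A, c - lam * bar c ∈ Lambda
  lambdaMax_mem : ∀ x ∈ Lambda, x = -(lam * bar x)
  lambda_conj : ∀ (c : A), ∀ x ∈ Lambda, c * x * bar c ∈ Lambda

namespace FormRingData

variable {A : Type*} [Ring A]

/-- Integral powers of the symmetry `λ`; negative powers use `λ̄ = λ⁻¹`. -/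
def lpow (D : FormRingData A) (k : ℤ) : A :=
  if 0 ≤ k then D.lam ^ k.toNat else (D.bar D.lam) ^ (-k).toNat

end FormRingData

/-- The index set `Ω = {1,…,n,−n,…,−1}`, coded as `Fin n × Bool`
(second component `true` = positive index). -/
abbrev Idx (n : ℕ) := Fin n × Bool

namespace Idx

/-- The involution `i ↦ −i` on indices. -/
def neg {n : ℕ} (i : Idx n) : Idx n := (i.1, !i.2)

/-- The sign `ε(i) ∈ {±1}`. -/
def eps {n : ℕ} (i : Idx n) : ℤ := if i.2 then 1 else -1

theorem neg_ne {n : ℕ} (i : Idx n) : neg i ≠ i := by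
  simp [neg, Prod.ext_iff]

theorem neg_injective {n : ℕ} : Function.Injective (neg (n := n)) := by
  intro i j h
  simp only [neg, Prod.mk.injEq] at h
  refine Prod.ext h.1 ?_
  have h2 := h.2
  cases hi : i.2 <;> cases hj : j.2 <;> simp_all

theorem neg_neg {n : ℕ} (i : Idx n) : neg (neg i) = i := by
  simp [neg]

end Idx

/-- `GL(2n, A)`, realised as the units of the `Ω × Ω` matrix ring over `A`. -/
abbrev GLn (A : Type*) [Ring A] (n : ℕ) := (Matrix (Idx n) (Idx n) A)ˣ

section aux

theorem one_add_mul_one_sub {R : Type*} [Ring R] {X : R} (h : X * X = 0) :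
    (1 + X) * (1 - X) = 1 := by
  have hh : (1 + X) * (1 - X) = 1 - X * X := by noncomm_ring
  rw [hh, h, sub_zero]

theorem one_sub_mul_one_add {R : Type*} [Ring R] {X : R} (h : X * X = 0) :
    (1 - X) * (1 + X) = 1 := by
  have hh : (1 - X) * (1 + X) = 1 - X * X := by noncomm_ring
  rw [hh, h, sub_zero]

theorem stdBasisMatrix_neg' {A : Type*} [Ring A] {n : ℕ} (i j : Idx n) (c : A) :
    Matrix.single i j (-c) = -Matrix.single i j c := by
  refine eq_neg_of_add_eq_zero_left ?_
  rw [← Matrix.single_add]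
  simp

end aux

namespace FormRingData

variable {A : Type*} [Ring A] {n : ℕ}

/-- The off-diagonal part of a short root element. -/
def Xmat (D : FormRingData A) (i j : Idx n) (c : A) : Matrix (Idx n) (Idx n) A :=
  Matrix.single i j c -
    Matrix.single (Idx.neg j) (Idx.neg i) (D.lpow ((Idx.eps j - Idx.eps i) / 2) * D.bar c)

theorem Xmat_mul (D : FormRingData A) {i j : Idx n} (hij : i ≠ j) (c c' : A) :
    D.Xmat i j c * D.Xmat i j c' = 0 := by
  unfold Xmat
  rw [sub_mul, mul_sub, mul_sub,
    Matrix.single_mul_single_of_ne _ _ _ _ (Ne.symm hij),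
    Matrix.single_mul_single_of_ne _ _ _ _ (Ne.symm (Idx.neg_ne j)),
    Matrix.single_mul_single_of_ne _ _ _ _ (Idx.neg_ne i),
    Matrix.single_mul_single_of_ne _ _ _ _ (fun h => hij (Idx.neg_injective h))]
  simp

theorem Xmat_neg (D : FormRingData A) (i j : Idx n) (c : A) :
    D.Xmat i j (-c) = -D.Xmat i j c := by
  unfold Xmat
  rw [map_neg, mul_neg, stdBasisMatrix_neg', stdBasisMatrix_neg']
  abel

/-- The elementary short root unipotent `T_{ij}(c)`, for `i ≠ ±j`
(with junk value `1` when `i = j`). -/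
def TS (D : FormRingData A) (i j : Idx n) (c : A) : GLn A n :=
  if h : i = j then 1 else
    { val := 1 + D.Xmat i j c
      inv := 1 + D.Xmat i j (-c)
      val_inv := by
        rw [D.Xmat_neg, ← sub_eq_add_neg]
        exact one_add_mul_one_sub (D.Xmat_mul h c c)
      inv_val := by
        rw [D.Xmat_neg, ← sub_eq_add_neg]
        exact one_sub_mul_one_add (D.Xmat_mul h c c) }

/-- The elementary long root unipotent `T_{i,−i}(c)`. -/
def TL (D : FormRingData A) (i : Idx n) (c : A) : GLn A n where
  val := 1 + Matrix.single i (Idx.neg i) c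
  inv := 1 + Matrix.single i (Idx.neg i) (-c)
  val_inv := by
    rw [stdBasisMatrix_neg', ← sub_eq_add_neg]
    exact one_add_mul_one_sub (Matrix.single_mul_single_of_ne _ _ _ _ (Idx.neg_ne i) _)
  inv_val := by
    rw [stdBasisMatrix_neg', ← sub_eq_add_neg]
    exact one_sub_mul_one_add (Matrix.single_mul_single_of_ne _ _ _ _ (Idx.neg_ne i) _)

/-- The elementary unitary transvection `T_{ij}(c)` (long or short root type
according to whether `j = −i`). -/
def T (D : FormRingData A) (i j : Idx n) (c : A) : GLn A n :=
  if j = Idx.neg i then D.TL i c else D.TS i j c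

/-- The elementary commutator `Y_{ij}(a,b) = [T_{ij}(a), T_{ji}(b)]`. -/
def Y (D : FormRingData A) (i j : Idx n) (a b : A) : GLn A n :=
  ⁅D.T i j a, D.T j i b⁆

/-- The elementary conjugate `Z_{ij}(a,c) = T_{ji}(c) T_{ij}(a) T_{ji}(−c)`. -/
def Z (D : FormRingData A) (i j : Idx n) (a c : A) : GLn A n :=
  D.T j i c * D.T i j a * D.T j i (-c)

/-- The set of elementary unitary transvections of level `(I,Γ)`. -/
def transvGen (D : FormRingData A) (n : ℕ) (I Γ : AddSubgroup A) : Set (GLn A n) :=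
  {x | ∃ i j : Idx n, i ≠ j ∧ i ≠ Idx.neg j ∧ ∃ c ∈ I, x = D.TS i j c} ∪
    {x | ∃ i : Idx n, ∃ g ∈ Γ, x = D.TL i (D.lpow (-(Idx.eps i + 1) / 2) * g)}

/-- The unrelative elementary subgroup `FU(2n, I, Γ)`. -/
def FU (D : FormRingData A) (n : ℕ) (I Γ : AddSubgroup A) : Subgroup (GLn A n) :=
  Subgroup.closure (D.transvGen n I Γ)

/-- The absolute elementary unitary group `EU(2n, A, Λ)`. -/
def EUmax (D : FormRingData A) (n : ℕ) : Subgroup (GLn A n) :=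
  D.FU n ⊤ D.Lambda

/-- The relative elementary subgroup `EU(2n, I, Γ)`: the normal closure of
`FU(2n, I, Γ)` in `EU(2n, A, Λ)`. -/
def EU (D : FormRingData A) (n : ℕ) (I Γ : AddSubgroup A) : Subgroup (GLn A n) :=
  Subgroup.closure {x | ∃ g ∈ D.EUmax n, ∃ t ∈ D.transvGen n I Γ, x = g * t * g⁻¹}

/-- The additive subgroup generated by products `st`, `s ∈ S`, `t ∈ T`. -/
def mulSub (S T : AddSubgroup A) : AddSubgroup A :=
  AddSubgroup.closure {x | ∃ a ∈ S, ∃ b ∈ T, x = a * b}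

/-- The symmetrised product `ST + TS` of two (additive subgroups underlying)
two-sided ideals. -/
def symI (S T : AddSubgroup A) : AddSubgroup A :=
  mulSub S T ⊔ mulSub T S

/-- The minimal relative form parameter `Γ_min(K)` of level `K`. -/
def gammaMin (D : FormRingData A) (K : AddSubgroup A) : AddSubgroup A :=
  AddSubgroup.closure
    ({x | ∃ a ∈ K, x = a - D.lam * D.bar a} ∪
      {x | ∃ a ∈ K, ∃ c ∈ D.Lambda, x = a * c * D.bar a})

/-- The relative form parameter `ˢΓ = ⟨ b γ b̄ ∣ b ∈ S, γ ∈ Γ ⟩`. -/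
def conjPar (D : FormRingData A) (S Γ : AddSubgroup A) : AddSubgroup A :=
  AddSubgroup.closure {x | ∃ b ∈ S, ∃ g ∈ Γ, x = b * g * D.bar b}

/-- The relative form parameter of the symmetrised product
`(I,Γ)∘(J,Δ) = (IJ+JI, Γ_min(IJ+JI) + ᴶΓ + ᴵΔ)`. -/
def symG (D : FormRingData A) (I Γ J Δ : AddSubgroup A) : AddSubgroup A :=
  D.gammaMin (symI I J) ⊔ D.conjPar J Γ ⊔ D.conjPar I Δ

/-- The elementary subgroup `EU(2n, (I,Γ)∘(J,Δ))` of the symmetrised product. -/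
def EUsym (D : FormRingData A) (n : ℕ) (I Γ J Δ : AddSubgroup A) : Subgroup (GLn A n) :=
  D.EU n (symI I J) (D.symG I Γ J Δ)

/-- Position-dependent membership `a ∈ (I,Γ)` at position `(i,j)`:
`a ∈ I` for a short root position, `a ∈ λ^{−(ε(i)+1)/2}Γ` for a long one. -/
def pmem (D : FormRingData A) (I Γ : AddSubgroup A) {n : ℕ} (i j : Idx n) (a : A) : Prop :=
  if j = Idx.neg i then ∃ g ∈ Γ, a = D.lpow (-(Idx.eps i + 1) / 2) * g else a ∈ I

end FormRingData

/-- A form ideal `(I,Γ)` of the form ring `(A,Λ)`. -/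
structure FormIdeal {A : Type*} [Ring A] (D : FormRingData A) where
  I : AddSubgroup A
  Gamma : AddSubgroup A
  mul_mem_left : ∀ (c : A), ∀ x ∈ I, c * x ∈ I
  mul_mem_right : ∀ (c : A), ∀ x ∈ I, x * c ∈ I
  bar_mem : ∀ x ∈ I, D.bar x ∈ I
  gammaMin_le : D.gammaMin I ≤ Gamma
  gamma_le_I : Gamma ≤ I
  gamma_le_Lambda : Gamma ≤ D.Lambda
  gamma_conj : ∀ (c : A), ∀ x ∈ Gamma, c * x * D.bar c ∈ Gamma

/-!
Take `l ≠ ±i, ±j`. The products `T_il(x) T_jl(y)` form a group isomorphic to `A × A`, on which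
`T_ij(a)` and `T_ji(b)` act by the elementary `2 × 2` matrices with off-diagonal entries `a` and
`b`. The commutator of these two matrices is the identity modulo the one-sided multiples of `ab` and
`ba`, so `Y_ij(a,b)` commutes with `T_il(x) T_jl(y)` modulo `EU((I,Γ)∘(J,Δ))`; likewise for the
products `T_li(x) T_lj(y)`. Transvections avoiding the rows and columns `±i, ±j` commute with
`Y_ij(a,b)` outright. Since `n ≥ 3`, the transvections with at least one index outside `{±i, ±j}`
generate the whole elementary group: `T_kl(c) = [T_km(c), T_ml(1)]`, and a long transvection
`T_{k,−k}` is obtained by conjugating a long transvection `T_{m,−m}` with `T_km(1)`.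
-/

section RingTheory

theorem one_add_mul_one_add_eq {R : Type*} [Ring R] {X W : R} (hX : X * X = 0) (hW : W * W = 0)
    (hWXW : W * X * W = 0) :
    (1 + X) * (1 + W) = (1 - X * W * X) * (1 + (X * W - W * X)) * (1 + W) * (1 + X) := by
  have mul_hX (Y : R) : Y * X * X = 0 := by rw [mul_assoc, hX, mul_zero]
  have mul_hW (Y : R) : Y * W * W = 0 := by rw [mul_assoc, hW, mul_zero]
  have hXWXW : X * W * X * W = 0 := by rw [mul_assoc X, mul_assoc X, hWXW, mul_zero]
  simp only [mul_add, add_mul, mul_sub, sub_mul, mul_one, one_mul, ← mul_assoc, hWXW, mul_hX,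
    mul_hW, hXWXW, add_zero, sub_zero]
  abel

end RingTheory

section GroupTheory

variable {G M : Type*} [Group G] [AddCommGroup M]

/-- The centralizer of `y` modulo `N`, encoded inside the normalizer of `N` so that `N` need not be
normal in `G`. -/
def centralizerMod (N : Subgroup G) (y : G) : Subgroup G where
  carrier := {x | x ∈ Subgroup.normalizer N ∧ ⁅x, y⁆ ∈ N}
  one_mem' := ⟨one_mem _, by simp [one_mem]⟩
  mul_mem' := by
    rintro u v ⟨hu, huy⟩ ⟨hv, hvy⟩
    refine ⟨mul_mem hu hv, ?_⟩
    rw [commutatorElement_mul_left_eq_conj_mul]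
    exact mul_mem ((hu _).mp hvy) huy
  inv_mem' := by
    rintro u ⟨hu, huy⟩
    refine ⟨inv_mem hu, ?_⟩
    rw [commutatorElement_inv_left, ← commutatorElement_inv]
    exact (Subgroup.mem_normalizer_iff''.mp hu _).mp (inv_mem huy)

theorem mem_centralizerMod_of_commute {N : Subgroup G} {x y : G}
    (hx : x ∈ Subgroup.normalizer N) (h : Commute x y) : x ∈ centralizerMod N y :=
  ⟨hx, by rw [commutatorElement_eq_one_iff_commute.mpr h]; exact one_mem N⟩

/-- With `f² = g² = 0`, `(1 + f)(1 + g)(1 - f)(1 - g) = 1 + fg(1 - f + fg) - gf(1 - g)`. -/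
theorem commutator_commutator_mem_of_conj_eq {N : Subgroup G} {U : M → G} {p q : G} {f g : M →+ M}
    (hU : ∀ v w, U (v + w) = U v * U w)
    (hp : ∀ v, p * U v * p⁻¹ = U (v + f v)) (hq : ∀ v, q * U v * q⁻¹ = U (v + g v))
    (hff : ∀ v, f (f v) = 0) (hgg : ∀ v, g (g v) = 0)
    (hfg : ∀ v, U (f (g v)) ∈ N) (hgf : ∀ v, U (g (f v)) ∈ N) (v : M) :
    ⁅U v, ⁅p, q⁆⁆ ∈ N := by
  have conj_inv {r : G} {e : M →+ M} (hr : ∀ w, r * U w * r⁻¹ = U (w + e w))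
      (hee : ∀ w, e (e w) = 0) (w : M) : r⁻¹ * U w * r = U (w - e w) := by
    have hw := hr (w - e w)
    rw [map_sub, hee, sub_zero, sub_add_cancel] at hw
    rw [← hw]
    group
  have conj_commutator : ⁅p, q⁆ * U v * ⁅p, q⁆⁻¹ =
      U (f (g (v - f v + f (g v))) + g (f (g v - v)) + v) := calc
    _ = p * (q * (p⁻¹ * (q⁻¹ * U v * q) * p) * q⁻¹) * p⁻¹ := by
      rw [commutatorElement_def]
      group
    _ = _ := by
      rw [conj_inv hq hgg, conj_inv hp hff, hq, hp]
      simp only [map_add, map_sub, map_zero, hff, hgg]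
      congr 1
      abel
  rw [← commutatorElement_inv, commutatorElement_def, conj_commutator, hU, hU,
    mul_inv_cancel_right]
  exact inv_mem (mul_mem (hfg _) (hgf _))

end GroupTheory

namespace Idx

variable {n : ℕ} {i j : Idx n}

theorem ne_of_fst_ne (h : i.1 ≠ j.1) : i ≠ j := mt (congrArg Prod.fst) h

theorem fst_eq_fst_iff : i.1 = j.1 ↔ i = j ∨ i = neg j := by
  rcases i with ⟨i, _ | _⟩ <;> rcases j with ⟨j, _ | _⟩ <;> simp [neg, Prod.ext_iff]

end Idx

namespace FormRingData

variable {A : Type*} [Ring A] {n : ℕ} (D : FormRingData A)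

section Twist

theorem bar_one : D.bar 1 = 1 := by
  simpa [D.bar_bar] using (D.bar_mul 1 (D.bar 1)).symm

theorem bar_lam_mul_lam : D.bar D.lam * D.lam = 1 := by
  rw [← D.lam_comm, D.lam_bar]

theorem bar_lam_comm (a : A) : D.bar D.lam * a = a * D.bar D.lam := by
  simpa only [D.bar_mul, D.bar_bar] using (congrArg D.bar (D.lam_comm (D.bar a))).symm

theorem lpow_zero : D.lpow 0 = 1 := by simp [lpow]

theorem lpow_one : D.lpow 1 = D.lam := by simp [lpow]

theorem lpow_neg_one : D.lpow (-1) = D.bar D.lam := by simp [lpow]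

/-- The scalar `λ^{(ε(j)−ε(i))/2}` in the second off-diagonal entry of `T_{ij}(c)`. -/
def twist (i j : Idx n) : A := D.lpow ((Idx.eps j - Idx.eps i) / 2)

theorem twist_eq_ite (i j : Idx n) :
    D.twist i j = if i.2 = j.2 then 1 else if j.2 then D.lam else D.bar D.lam := by
  rcases i with ⟨_, _ | _⟩ <;> rcases j with ⟨_, _ | _⟩ <;>
    simp [twist, Idx.eps, lpow_zero, lpow_one, lpow_neg_one]

theorem twist_of_snd_eq {i j : Idx n} (h : i.2 = j.2) : D.twist i j = 1 := by
  rw [twist_eq_ite, if_pos h]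

theorem twist_comm (i j : Idx n) (a : A) : D.twist i j * a = a * D.twist i j := by
  rw [twist_eq_ite]
  split_ifs
  exacts [(Commute.one_left a).eq, D.lam_comm a, D.bar_lam_comm a]

theorem twist_mul_twist (i j k : Idx n) : D.twist j k * D.twist i j = D.twist i k := by
  rcases i with ⟨_, _ | _⟩ <;> rcases j with ⟨_, _ | _⟩ <;> rcases k with ⟨_, _ | _⟩ <;>
    simp [twist_eq_ite, D.lam_bar, D.bar_lam_mul_lam]

theorem bar_twist (i j : Idx n) : D.bar (D.twist i j) = D.twist j i := by
  rcases i with ⟨_, _ | _⟩ <;> rcases j with ⟨_, _ | _⟩ <;>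
    simp [twist_eq_ite, D.bar_one, D.bar_bar]

theorem twist_neg_neg (i j : Idx n) : D.twist (Idx.neg j) (Idx.neg i) = D.twist i j := by
  rcases i with ⟨_, _ | _⟩ <;> rcases j with ⟨_, _ | _⟩ <;> simp [twist_eq_ite, Idx.neg]

/-- The scalar `λ^{−(ε(i)+1)/2}` by which the form parameter is shifted at the position `(i,−i)`. -/
def longTwist (i : Idx n) : A := D.lpow (-(Idx.eps i + 1) / 2)

theorem longTwist_eq_ite (i : Idx n) : D.longTwist i = if i.2 then D.bar D.lam else 1 := by
  rcases i with ⟨_, _ | _⟩ <;> simp [longTwist, Idx.eps, lpow_zero, lpow_neg_one]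

theorem twist_mul_bar_longTwist_mul {g : A} (hg : g ∈ D.Lambda) (i : Idx n) :
    D.twist i (Idx.neg i) * D.bar (D.longTwist i * g) = -(D.longTwist i * g) := by
  have hskew := D.lambdaMax_mem g hg
  rcases i with ⟨i, _ | _⟩
  · simpa [twist_eq_ite, longTwist_eq_ite, Idx.neg] using neg_eq_iff_eq_neg.mpr hskew |>.symm
  · have : D.bar D.lam * g = -D.bar g := by
      conv_lhs => rw [hskew]
      rw [mul_neg, ← mul_assoc, D.bar_lam_mul_lam, one_mul]
    simp [twist_eq_ite, longTwist_eq_ite, Idx.neg, this, D.bar_bar]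

end Twist

section Transvections

variable {i j k l : Idx n}

theorem Xmat_eq (i j : Idx n) (c : A) :
    D.Xmat i j c = single i j c - single (Idx.neg j) (Idx.neg i) (D.twist i j * D.bar c) := rfl

theorem Xmat_add (i j : Idx n) (c d : A) : D.Xmat i j (c + d) = D.Xmat i j c + D.Xmat i j d := by
  simp only [Xmat_eq, map_add, mul_add, single_add]
  abel

theorem Xmat_neg_neg (i j : Idx n) (c : A) :
    D.Xmat (Idx.neg j) (Idx.neg i) (-(D.twist i j * D.bar c)) = D.Xmat i j c := by
  have : D.twist i j * (c * D.twist j i) = c := by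
    rw [← D.twist_comm j i, ← mul_assoc, twist_mul_twist, twist_of_snd_eq _ rfl, one_mul]
  simp only [Xmat_eq, Idx.neg_neg, twist_neg_neg, map_neg, D.bar_mul, D.bar_bar, bar_twist, mul_neg,
    this, stdBasisMatrix_neg']
  abel

theorem Xmat_mul_eq_zero (hjk : j ≠ k) (hjl : j ≠ Idx.neg l) (hik : Idx.neg i ≠ k) (hil : i ≠ l)
    (c d : A) : D.Xmat i j c * D.Xmat k l d = 0 := by
  simp only [Xmat_eq, sub_mul, mul_sub, single_mul_single_of_ne _ _ _ _ hjk,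
    single_mul_single_of_ne _ _ _ _ hjl, single_mul_single_of_ne _ _ _ _ hik,
    single_mul_single_of_ne _ _ _ _ (Idx.neg_injective.ne hil), sub_self]

theorem Xmat_commutator (hij : i.1 ≠ j.1) (hjl : j.1 ≠ l.1) (hil : i.1 ≠ l.1) (a c : A) :
    D.Xmat i j a * D.Xmat j l c - D.Xmat j l c * D.Xmat i j a = D.Xmat i l (a * c) := by
  have entry : D.twist j l * D.bar c * (D.twist i j * D.bar a) =
      D.twist i l * D.bar (a * c) := by
    rw [D.bar_mul, ← D.twist_mul_twist i j l, mul_assoc, mul_assoc, ← mul_assoc (D.bar c),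
      ← D.twist_comm i j, mul_assoc]
  have hzero {p q r s : Idx n} (h : q.1 ≠ r.1) (c d : A) :
      single p q c * single r s d = 0 :=
    single_mul_single_of_ne _ _ _ _ (Idx.ne_of_fst_ne h) _
  simp only [Xmat_eq, sub_mul, mul_sub, single_mul_single_same, entry]
  rw [hzero (r := Idx.neg l) hjl, hzero (q := Idx.neg i) hij,
    hzero (q := Idx.neg i) (r := Idx.neg l) hil, hzero hil.symm,
    hzero (r := Idx.neg j) hjl.symm, hzero (q := Idx.neg j) hij.symm]
  abel

theorem coe_TS (hij : i.1 ≠ j.1) (c : A) :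
    (D.TS i j c : Matrix (Idx n) (Idx n) A) = 1 + D.Xmat i j c := by
  rw [TS, dif_neg (Idx.ne_of_fst_ne hij)]

theorem coe_TL (i : Idx n) (c : A) :
    (D.TL i c : Matrix (Idx n) (Idx n) A) = 1 + single i (Idx.neg i) c := rfl

theorem TS_add (hij : i.1 ≠ j.1) (c d : A) : D.TS i j (c + d) = D.TS i j c * D.TS i j d := by
  apply Units.ext
  simp only [Units.val_mul, coe_TS D hij, Xmat_add, mul_add, add_mul, mul_one, one_mul,
    D.Xmat_mul (Idx.ne_of_fst_ne hij)]
  abel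

theorem TS_zero (hij : i.1 ≠ j.1) : D.TS i j 0 = 1 :=
  (left_eq_mul (a := D.TS i j 0)).mp (by rw [← D.TS_add hij, add_zero])

theorem TS_neg (hij : i.1 ≠ j.1) (c : A) : D.TS i j (-c) = (D.TS i j c)⁻¹ := by
  rw [eq_inv_iff_mul_eq_one, ← D.TS_add hij, neg_add_cancel, D.TS_zero hij]

theorem TS_eq_TS_neg_neg (hij : i.1 ≠ j.1) (c : A) :
    D.TS i j c = D.TS (Idx.neg j) (Idx.neg i) (-(D.twist i j * D.bar c)) := by
  apply Units.ext
  rw [D.coe_TS hij, D.coe_TS (i := Idx.neg j) (j := Idx.neg i) hij.symm, Xmat_neg_neg]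

theorem commute_TS_TS (hij : i.1 ≠ j.1) (hkl : k.1 ≠ l.1) (hjk : j ≠ k) (hil : i ≠ l)
    (hjl : j ≠ Idx.neg l) (hik : Idx.neg i ≠ k) (c d : A) :
    Commute (D.TS i j c) (D.TS k l d) := by
  have hlj : l ≠ Idx.neg j := fun h => hjl (by rw [h, Idx.neg_neg])
  have hki : Idx.neg k ≠ i := fun h => hik (by rw [← h, Idx.neg_neg])
  have hX : Commute (D.Xmat i j c) (D.Xmat k l d) := by
    rw [Commute, SemiconjBy, D.Xmat_mul_eq_zero hjk hjl hik hil,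
      D.Xmat_mul_eq_zero hil.symm hlj hki hjk.symm]
  apply Units.ext
  simpa only [Units.val_mul, coe_TS D hij, coe_TS D hkl] using
    ((Commute.one_left _).add_left ((Commute.one_right _).add_right hX)).eq

theorem commute_TL_TS (hij : i.1 ≠ j.1) (hki : k.1 ≠ i.1) (hkj : k.1 ≠ j.1) (g c : A) :
    Commute (D.TL k g) (D.TS i j c) := by
  have hX : Commute (single k (Idx.neg k) g) (D.Xmat i j c) := by
    simp only [Commute, SemiconjBy, Xmat_eq, mul_sub, sub_mul,
      single_mul_single_of_ne _ _ _ _ (show Idx.neg k ≠ i from Idx.ne_of_fst_ne hki),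
      single_mul_single_of_ne _ _ _ _ (show Idx.neg k ≠ Idx.neg j from Idx.ne_of_fst_ne hkj),
      single_mul_single_of_ne _ _ _ _ (Idx.ne_of_fst_ne hkj.symm),
      single_mul_single_of_ne _ _ _ _ (show Idx.neg i ≠ k from Idx.ne_of_fst_ne hki.symm)]
  apply Units.ext
  simpa only [Units.val_mul, coe_TL, coe_TS D hij] using
    ((Commute.one_left _).add_left ((Commute.one_right _).add_right hX)).eq

theorem TS_conj_TS (hij : i.1 ≠ j.1) (hjl : j.1 ≠ l.1) (hil : i.1 ≠ l.1) (a c : A) :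
    D.TS i j a * D.TS j l c * (D.TS i j a)⁻¹ = D.TS i l (a * c) * D.TS j l c := by
  have hcomm := D.Xmat_commutator hij hjl hil a c
  have hXX := D.Xmat_mul (Idx.ne_of_fst_ne hij) a a
  have hWW := D.Xmat_mul (Idx.ne_of_fst_ne hjl) c c
  have hZX : D.Xmat i l (a * c) * D.Xmat i j a = 0 :=
    D.Xmat_mul_eq_zero (Idx.ne_of_fst_ne hil.symm) (Idx.ne_of_fst_ne hjl.symm) (Idx.neg_ne i)
      (Idx.ne_of_fst_ne hij) _ _
  have hZW : D.Xmat i l (a * c) * D.Xmat j l c = 0 :=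
    D.Xmat_mul_eq_zero (Idx.ne_of_fst_ne hjl.symm) (Idx.neg_ne l).symm (Idx.ne_of_fst_ne hij)
      (Idx.ne_of_fst_ne hil) _ _
  rw [← hcomm, sub_mul, mul_assoc (D.Xmat j l c), hXX, mul_zero, sub_zero] at hZX
  rw [← hcomm, sub_mul, mul_assoc, hWW, mul_zero, zero_sub, neg_eq_zero] at hZW
  rw [mul_inv_eq_iff_eq_mul]
  apply Units.ext
  simp only [Units.val_mul, coe_TS D hij, coe_TS D hjl, coe_TS D hil]
  rw [one_add_mul_one_add_eq hXX hWW hZW, hZX, sub_zero, one_mul, hcomm]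

theorem Xmat_neg_right_of_skew (c : A) {g : A} (hg : D.twist l (Idx.neg l) * D.bar g = -g) :
    D.Xmat i (Idx.neg l) (c * g) =
      single i (Idx.neg l) (c * g) + single l (Idx.neg i) (D.twist i l * (g * D.bar c)) := by
  have entry : D.twist i (Idx.neg l) * D.bar (c * g) = -(D.twist i l * (g * D.bar c)) := by
    rw [D.bar_mul, ← D.twist_mul_twist i l, D.twist_comm l, mul_assoc,
      ← mul_assoc (D.twist l _), hg, neg_mul, mul_neg]
  rw [Xmat_eq, entry, Idx.neg_neg, stdBasisMatrix_neg', sub_neg_eq_add]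

theorem TS_conj_TL (hil : i.1 ≠ l.1) (c : A) {g : A}
    (hg : D.twist l (Idx.neg l) * D.bar g = -g) :
    D.TS i l c * D.TL l g * (D.TS i l c)⁻¹ =
      D.TL i (D.twist i l * (c * g * D.bar c)) * D.TS i (Idx.neg l) (c * g) * D.TL l g := by
  have hnl : Idx.neg l ≠ i := Idx.ne_of_fst_ne hil.symm
  have hni : Idx.neg i ≠ l := Idx.ne_of_fst_ne hil
  have hXE : D.Xmat i l c * single l (Idx.neg l) g = single i (Idx.neg l) (c * g) := by
    simp only [Xmat_eq, sub_mul, single_mul_single_same, single_mul_single_of_ne _ _ _ _ hni,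
      sub_zero]
  have hEX : single l (Idx.neg l) g * D.Xmat i l c =
      -single l (Idx.neg i) (D.twist i l * (g * D.bar c)) := by
    simp only [Xmat_eq, mul_sub, single_mul_single_same, single_mul_single_of_ne _ _ _ _ hnl,
      zero_sub, ← mul_assoc, D.twist_comm]
  have hXEX : D.Xmat i l c * single l (Idx.neg l) g * D.Xmat i l c =
      -single i (Idx.neg i) (D.twist i l * (c * g * D.bar c)) := by
    rw [hXE]
    simp only [Xmat_eq, mul_sub, single_mul_single_same, single_mul_single_of_ne _ _ _ _ hnl,
      zero_sub, ← mul_assoc, D.twist_comm]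
  have hcomm : D.Xmat i l c * single l (Idx.neg l) g - single l (Idx.neg l) g * D.Xmat i l c =
      D.Xmat i (Idx.neg l) (c * g) := by
    rw [hXE, hEX, sub_neg_eq_add, D.Xmat_neg_right_of_skew c hg]
  have hEE : single l (Idx.neg l) g * single l (Idx.neg l) g = 0 :=
    single_mul_single_of_ne _ _ _ _ (Idx.neg_ne l) _
  have hEXE : single l (Idx.neg l) g * D.Xmat i l c * single l (Idx.neg l) g = 0 := by
    rw [mul_assoc, hXE, single_mul_single_of_ne _ _ _ _ hnl]
  rw [mul_inv_eq_iff_eq_mul]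
  apply Units.ext
  simp only [Units.val_mul, coe_TS D hil, coe_TL, coe_TS D (j := Idx.neg l) hil]
  rw [one_add_mul_one_add_eq (D.Xmat_mul (Idx.ne_of_fst_ne hil) c c) hEE hEXE, hcomm, hXEX,
    sub_neg_eq_add]

end Transvections

section ElementaryGroups

variable {i j l : Idx n} {K Γ : AddSubgroup A}

theorem TS_mem_EUmax (hij : i.1 ≠ j.1) (c : A) : D.TS i j c ∈ D.EUmax n :=
  Subgroup.subset_closure <| Or.inl
    ⟨i, j, Idx.ne_of_fst_ne hij, Idx.ne_of_fst_ne (j := Idx.neg j) hij, c, trivial, rfl⟩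

theorem TL_mem_EUmax (i : Idx n) {g : A} (hg : g ∈ D.Lambda) :
    D.TL i (D.longTwist i * g) ∈ D.EUmax n :=
  Subgroup.subset_closure (Or.inr ⟨i, g, hg, rfl⟩)

theorem TS_mem_EU (hij : i.1 ≠ j.1) {c : A} (hc : c ∈ K) : D.TS i j c ∈ D.EU n K Γ :=
  Subgroup.subset_closure ⟨1, one_mem _, _, Or.inl
    ⟨i, j, Idx.ne_of_fst_ne hij, Idx.ne_of_fst_ne (j := Idx.neg j) hij, c, hc, rfl⟩, by simp⟩

theorem EUmax_le_normalizer_EU : D.EUmax n ≤ Subgroup.normalizer (D.EU n K Γ) := by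
  rw [EU, Subgroup.le_normalizer_closure_iff]
  rintro x hx _ ⟨g, hg, t, ht, rfl⟩
  exact Subgroup.subset_closure ⟨x * g, mul_mem hx hg, t, ht, by group⟩

theorem TS_mem_of_TS_mem {H : Subgroup (GLn A n)} (hij : i.1 ≠ j.1) (hjl : j.1 ≠ l.1)
    (hil : i.1 ≠ l.1) {c : A} (hc : D.TS i j c ∈ H) (h1 : D.TS j l 1 ∈ H) : D.TS i l c ∈ H := by
  have hconj := mul_mem (mul_mem hc h1) (inv_mem hc)
  rwa [D.TS_conj_TS hij hjl hil, mul_one, H.mul_mem_cancel_right h1] at hconj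

theorem TL_mem_of_TS_mem_of_TL_mem {H : Subgroup (GLn A n)} (hil : i.1 ≠ l.1) (hsign : i.2 = l.2)
    {g : A} (hg : g ∈ D.Lambda) (hTS : ∀ p : Idx n, p.1 = l.1 → ∀ c, D.TS i p c ∈ H)
    (hTL : D.TL l (D.longTwist l * g) ∈ H) : D.TL i (D.longTwist i * g) ∈ H := by
  have hconj := mul_mem (mul_mem (hTS l rfl 1) hTL) (inv_mem (hTS l rfl 1))
  rw [D.TS_conj_TL hil 1 (D.twist_mul_bar_longTwist_mul hg l), H.mul_mem_cancel_right hTL,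
    H.mul_mem_cancel_right (hTS (Idx.neg l) rfl _)] at hconj
  rwa [D.twist_of_snd_eq hsign, D.bar_one, one_mul, one_mul, mul_one, longTwist_eq_ite, ← hsign,
    ← longTwist_eq_ite] at hconj

theorem EUmax_le_of_mem_of_fst_notMem {S : Set (Fin n)} {m : Fin n} (hm : m ∉ S)
    {H : Subgroup (GLn A n)}
    (hTS : ∀ k l : Idx n, k.1 ≠ l.1 → k.1 ∉ S ∨ l.1 ∉ S → ∀ c, D.TS k l c ∈ H)
    (hTL : ∀ k : Idx n, k.1 ∉ S → ∀ g ∈ D.Lambda, D.TL k (D.longTwist k * g) ∈ H) :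
    D.EUmax n ≤ H := by
  have ne_m {k : Idx n} (hk : k.1 ∈ S) : k.1 ≠ m := fun h => hm (h ▸ hk)
  rw [EUmax, FU, Subgroup.closure_le]
  rintro x (⟨k, l, hkl, hkl', c, -, rfl⟩ | ⟨k, g, hg, rfl⟩)
  · have hkl : k.1 ≠ l.1 := fun h => (Idx.fst_eq_fst_iff.mp h).elim hkl hkl'
    by_cases hS : k.1 ∈ S ∧ l.1 ∈ S
    · exact D.TS_mem_of_TS_mem (j := (m, true)) (ne_m hS.1) (ne_m hS.2).symm hkl
        (hTS _ _ (ne_m hS.1) (.inr hm) c) (hTS _ _ (ne_m hS.2).symm (.inl hm) 1)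
    · exact hTS k l hkl (not_and_or.mp hS) c
  · by_cases hk : k.1 ∈ S
    · refine D.TL_mem_of_TS_mem_of_TL_mem (l := (m, k.2)) (ne_m hk) rfl hg ?_ (hTL _ hm g hg)
      rintro p rfl c
      exact hTS k p (ne_m hk) (.inr hm) c
    · exact hTL k hk g hg

end ElementaryGroups

section ShortCommutators

variable {i j k l : Idx n} {K Γ : AddSubgroup A} {a b : A}

theorem Y_eq (hij : i.1 ≠ j.1) (a b : A) : D.Y i j a b = ⁅D.TS i j a, D.TS j i b⁆ := by
  rw [Y, T, T, if_neg (show j ≠ Idx.neg i from Idx.ne_of_fst_ne hij.symm),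
    if_neg (show i ≠ Idx.neg j from Idx.ne_of_fst_ne hij)]

theorem commute_Y (hij : i.1 ≠ j.1) {x : GLn A n} (ha : Commute x (D.TS i j a))
    (hb : Commute x (D.TS j i b)) : Commute x (D.Y i j a b) := by
  rw [D.Y_eq hij, commutatorElement_def]
  exact ((ha.mul_right hb).mul_right ha.inv_right).mul_right hb.inv_right

theorem commute_TS_TS_column (hij : i.1 ≠ j.1) (hil : i.1 ≠ l.1) (hjl : j.1 ≠ l.1) (x y : A) :
    Commute (D.TS i l x) (D.TS j l y) :=
  D.commute_TS_TS hil hjl (Idx.ne_of_fst_ne hjl.symm) (Idx.ne_of_fst_ne hil) (Idx.neg_ne l).symm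
    (Idx.ne_of_fst_ne hij) x y

theorem commute_TS_TS_row (hij : i.1 ≠ j.1) (hil : i.1 ≠ l.1) (hjl : j.1 ≠ l.1) (x y : A) :
    Commute (D.TS l i x) (D.TS l j y) :=
  D.commute_TS_TS hil.symm hjl.symm (Idx.ne_of_fst_ne hil) (Idx.ne_of_fst_ne hjl.symm)
    (Idx.ne_of_fst_ne hij) (Idx.neg_ne l) x y

theorem TS_conj_column (hij : i.1 ≠ j.1) (hil : i.1 ≠ l.1) (hjl : j.1 ≠ l.1) (a x y : A) :
    D.TS i j a * (D.TS i l x * D.TS j l y) * (D.TS i j a)⁻¹ =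
      D.TS i l (x + a * y) * D.TS j l y := by
  rw [← conj_mul, (D.commute_TS_TS_row hjl hij.symm hil.symm a x).mul_inv_cancel,
    D.TS_conj_TS hij hjl hil, D.TS_add hil, mul_assoc]

theorem TS_conj_row (hij : i.1 ≠ j.1) (hil : i.1 ≠ l.1) (hjl : j.1 ≠ l.1) (a x y : A) :
    D.TS i j a * (D.TS l i x * D.TS l j y) * (D.TS i j a)⁻¹ =
      D.TS l i x * D.TS l j (y - x * a) := by
  have hrel : D.TS i j a * D.TS l i x * (D.TS i j a)⁻¹ = D.TS l i x * D.TS l j (-(x * a)) := by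
    have h := D.TS_conj_TS hil.symm hij hjl.symm x a
    rw [(D.commute_TS_TS_row hij hil hjl x _).eq, D.TS_neg hjl.symm]
    rw [mul_inv_eq_iff_eq_mul] at h ⊢
    rw [mul_assoc, h]
    group
  rw [← conj_mul, (D.commute_TS_TS_column hil hij hjl.symm a y).mul_inv_cancel, hrel,
    sub_eq_neg_add, D.TS_add hjl.symm, mul_assoc]

theorem commutator_column_Y_mem (hij : i.1 ≠ j.1) (hil : i.1 ≠ l.1) (hjl : j.1 ≠ l.1)
    (hab : ∀ c, a * b * c ∈ K) (hba : ∀ c, b * a * c ∈ K) (x y : A) :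
    ⁅D.TS i l x * D.TS j l y, D.Y i j a b⁆ ∈ D.EU n K Γ := by
  let U (v : A × A) : GLn A n := D.TS i l v.1 * D.TS j l v.2
  let f : A × A →+ A × A := ((AddMonoidHom.mulLeft a).comp (AddMonoidHom.snd A A)).prod 0
  let g : A × A →+ A × A := AddMonoidHom.prod 0 ((AddMonoidHom.mulLeft b).comp (.fst A A))
  have hU (v w : A × A) : U (v + w) = U v * U w := by
    simp only [U, Prod.fst_add, Prod.snd_add, D.TS_add hil, D.TS_add hjl]
    exact (D.commute_TS_TS_column hij hil hjl _ _).mul_mul_mul_comm _ _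
  have hf (v : A × A) : D.TS i j a * U v * (D.TS i j a)⁻¹ = U (v + f v) := by
    simpa [U, f] using D.TS_conj_column hij hil hjl a v.1 v.2
  have hg (v : A × A) : D.TS j i b * U v * (D.TS j i b)⁻¹ = U (v + g v) := by
    simpa [U, g, (D.commute_TS_TS_column hij hil hjl _ _).eq] using
      D.TS_conj_column hij.symm hjl hil b v.2 v.1
  have hfg (v : A × A) : U (f (g v)) ∈ D.EU n K Γ := by
    simpa [U, f, g, D.TS_zero hjl, mul_assoc] using D.TS_mem_EU hil (hab v.1)
  have hgf (v : A × A) : U (g (f v)) ∈ D.EU n K Γ := by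
    simpa [U, f, g, D.TS_zero hil, mul_assoc] using D.TS_mem_EU hjl (hba v.2)
  rw [D.Y_eq hij]
  exact commutator_commutator_mem_of_conj_eq hU hf hg (by simp [f]) (by simp [g]) hfg hgf (x, y)

theorem commutator_row_Y_mem (hij : i.1 ≠ j.1) (hil : i.1 ≠ l.1) (hjl : j.1 ≠ l.1)
    (hab : ∀ c, c * (a * b) ∈ K) (hba : ∀ c, c * (b * a) ∈ K) (x y : A) :
    ⁅D.TS l i x * D.TS l j y, D.Y i j a b⁆ ∈ D.EU n K Γ := by
  let U (v : A × A) : GLn A n := D.TS l i v.1 * D.TS l j v.2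
  let f : A × A →+ A × A := AddMonoidHom.prod 0 (-(AddMonoidHom.mulRight a).comp (.fst A A))
  let g : A × A →+ A × A := (-(AddMonoidHom.mulRight b).comp (AddMonoidHom.snd A A)).prod 0
  have hU (v w : A × A) : U (v + w) = U v * U w := by
    simp only [U, Prod.fst_add, Prod.snd_add, D.TS_add hil.symm, D.TS_add hjl.symm]
    exact (D.commute_TS_TS_row hij hil hjl _ _).mul_mul_mul_comm _ _
  have hf (v : A × A) : D.TS i j a * U v * (D.TS i j a)⁻¹ = U (v + f v) := by
    simpa [U, f, sub_eq_add_neg] using D.TS_conj_row hij hil hjl a v.1 v.2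
  have hg (v : A × A) : D.TS j i b * U v * (D.TS j i b)⁻¹ = U (v + g v) := by
    simpa [U, g, sub_eq_add_neg, (D.commute_TS_TS_row hij hil hjl _ _).eq] using
      D.TS_conj_row hij.symm hjl hil b v.2 v.1
  have hfg (v : A × A) : U (f (g v)) ∈ D.EU n K Γ := by
    simpa [U, f, g, D.TS_zero hil.symm, mul_assoc] using D.TS_mem_EU hjl.symm (hba v.2)
  have hgf (v : A × A) : U (g (f v)) ∈ D.EU n K Γ := by
    simpa [U, f, g, D.TS_zero hjl.symm, mul_assoc] using D.TS_mem_EU hil.symm (hab v.1)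
  rw [D.Y_eq hij]
  exact commutator_commutator_mem_of_conj_eq hU hf hg (by simp [f]) (by simp [g]) hfg hgf (x, y)

theorem TS_mem_centralizerMod_Y_of_column (hij : i.1 ≠ j.1) (hil : i.1 ≠ l.1) (hjl : j.1 ≠ l.1)
    (hab : ∀ c, a * b * c ∈ K) (hba : ∀ c, b * a * c ∈ K) (hk : k = i ∨ k = j) (c : A) :
    D.TS k l c ∈ centralizerMod (D.EU n K Γ) (D.Y i j a b) := by
  rcases hk with rfl | rfl
  · refine ⟨D.EUmax_le_normalizer_EU (D.TS_mem_EUmax hil c), ?_⟩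
    simpa only [D.TS_zero hjl, mul_one] using D.commutator_column_Y_mem hij hil hjl hab hba c 0
  · refine ⟨D.EUmax_le_normalizer_EU (D.TS_mem_EUmax hjl c), ?_⟩
    simpa only [D.TS_zero hil, one_mul] using D.commutator_column_Y_mem hij hil hjl hab hba 0 c

theorem TS_mem_centralizerMod_Y_of_row (hij : i.1 ≠ j.1) (hil : i.1 ≠ l.1) (hjl : j.1 ≠ l.1)
    (hab : ∀ c, c * (a * b) ∈ K) (hba : ∀ c, c * (b * a) ∈ K) (hk : k = i ∨ k = j) (c : A) :
    D.TS l k c ∈ centralizerMod (D.EU n K Γ) (D.Y i j a b) := by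
  rcases hk with rfl | rfl
  · refine ⟨D.EUmax_le_normalizer_EU (D.TS_mem_EUmax hil.symm c), ?_⟩
    simpa only [D.TS_zero hjl.symm, mul_one] using D.commutator_row_Y_mem hij hil hjl hab hba c 0
  · refine ⟨D.EUmax_le_normalizer_EU (D.TS_mem_EUmax hjl.symm c), ?_⟩
    simpa only [D.TS_zero hil.symm, one_mul] using D.commutator_row_Y_mem hij hil hjl hab hba 0 c

theorem TS_mem_centralizerMod_Y (hij : i.1 ≠ j.1) (hil : i.1 ≠ l.1) (hjl : j.1 ≠ l.1)
    (hab : ∀ c, a * b * c ∈ K) (hba : ∀ c, b * a * c ∈ K)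
    (hab' : ∀ c, c * (a * b) ∈ K) (hba' : ∀ c, c * (b * a) ∈ K)
    (hk : k.1 = i.1 ∨ k.1 = j.1) (c : A) :
    D.TS k l c ∈ centralizerMod (D.EU n K Γ) (D.Y i j a b) := by
  have row {p : Idx n} (hp : p = i ∨ p = j) (c : A) :
      D.TS (Idx.neg p) l c ∈ centralizerMod (D.EU n K Γ) (D.Y i j a b) := by
    have hpl : p.1 ≠ l.1 := by rcases hp with rfl | rfl <;> assumption
    rw [D.TS_eq_TS_neg_neg (i := Idx.neg p) hpl, Idx.neg_neg]
    exact D.TS_mem_centralizerMod_Y_of_row (l := Idx.neg l) hij hil hjl hab' hba' hp _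
  rcases hk with hk | hk <;> rcases Idx.fst_eq_fst_iff.mp hk with rfl | rfl
  · exact D.TS_mem_centralizerMod_Y_of_column hij hil hjl hab hba (.inl rfl) c
  · exact row (.inl rfl) c
  · exact D.TS_mem_centralizerMod_Y_of_column hij hil hjl hab hba (.inr rfl) c
  · exact row (.inr rfl) c

theorem commute_TS_Y (hij : i.1 ≠ j.1) (hkl : k.1 ≠ l.1) (hki : k.1 ≠ i.1) (hkj : k.1 ≠ j.1)
    (hli : l.1 ≠ i.1) (hlj : l.1 ≠ j.1) (c : A) : Commute (D.TS k l c) (D.Y i j a b) := by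
  have commute_TS {p q : Idx n} (hpq : p.1 ≠ q.1) (hkp : k.1 ≠ p.1) (hlp : l.1 ≠ p.1)
      (hkq : k.1 ≠ q.1) (hlq : l.1 ≠ q.1) (d : A) : Commute (D.TS k l c) (D.TS p q d) :=
    D.commute_TS_TS hkl hpq (Idx.ne_of_fst_ne hlp) (Idx.ne_of_fst_ne hkq)
      (Idx.ne_of_fst_ne hlq) (Idx.ne_of_fst_ne hkp) c d
  exact D.commute_Y hij (commute_TS hij hki hli hkj hlj a) (commute_TS hij.symm hkj hlj hki hli b)

theorem commute_TL_Y (hij : i.1 ≠ j.1) (hki : k.1 ≠ i.1) (hkj : k.1 ≠ j.1) (c : A) :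
    Commute (D.TL k c) (D.Y i j a b) :=
  D.commute_Y hij (D.commute_TL_TS hij hki hkj c a) (D.commute_TL_TS hij.symm hkj hki c b)

theorem EUmax_le_centralizerMod_Y (hn : 3 ≤ n) (hij : i.1 ≠ j.1)
    (hab : ∀ c, a * b * c ∈ K) (hba : ∀ c, b * a * c ∈ K)
    (hab' : ∀ c, c * (a * b) ∈ K) (hba' : ∀ c, c * (b * a) ∈ K) :
    D.EUmax n ≤ centralizerMod (D.EU n K Γ) (D.Y i j a b) := by
  obtain ⟨m, hmi, hmj⟩ := Fin.exists_ne_and_ne_of_two_lt i.1 j.1 hn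
  let S : Set (Fin n) := {i.1, j.1}
  have mixed {k l : Idx n} (hk : k.1 ∈ S) (hl : l.1 ∉ S) (c : A) :
      D.TS k l c ∈ centralizerMod (D.EU n K Γ) (D.Y i j a b) := by
    obtain ⟨hli, hlj⟩ : l.1 ≠ i.1 ∧ l.1 ≠ j.1 := not_or.mp hl
    exact D.TS_mem_centralizerMod_Y hij hli.symm hlj.symm hab hba hab' hba' hk c
  refine D.EUmax_le_of_mem_of_fst_notMem (S := S) (m := m) (not_or.mpr ⟨hmi, hmj⟩)
    (fun k l hkl hS c => ?_) (fun k hk g hg => ?_)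
  · by_cases hk : k.1 ∈ S
    · exact mixed hk (hS.resolve_left (not_not_intro hk)) c
    by_cases hl : l.1 ∈ S
    · rw [D.TS_eq_TS_neg_neg hkl]
      exact mixed (k := Idx.neg l) (l := Idx.neg k) hl hk _
    obtain ⟨hki, hkj⟩ : k.1 ≠ i.1 ∧ k.1 ≠ j.1 := not_or.mp hk
    obtain ⟨hli, hlj⟩ : l.1 ≠ i.1 ∧ l.1 ≠ j.1 := not_or.mp hl
    exact mem_centralizerMod_of_commute (D.EUmax_le_normalizer_EU (D.TS_mem_EUmax hkl c))
      (D.commute_TS_Y hij hkl hki hkj hli hlj c)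
  · obtain ⟨hki, hkj⟩ : k.1 ≠ i.1 ∧ k.1 ≠ j.1 := not_or.mp hk
    exact mem_centralizerMod_of_commute (D.EUmax_le_normalizer_EU (D.TL_mem_EUmax k hg))
      (D.commute_TL_Y hij hki hkj _)

end ShortCommutators

theorem mul_mem_symI_left {I J : AddSubgroup A} {a b : A} (ha : a ∈ I) (hb : b ∈ J) :
    a * b ∈ symI I J :=
  AddSubgroup.mem_sup_left (AddSubgroup.subset_closure ⟨a, ha, b, hb, rfl⟩)

theorem mul_mem_symI_right {I J : AddSubgroup A} {a b : A} (ha : a ∈ I) (hb : b ∈ J) :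
    b * a ∈ symI I J :=
  AddSubgroup.mem_sup_right (AddSubgroup.subset_closure ⟨b, hb, a, ha, rfl⟩)

end FormRingData

theorem statement8_general {A : Type*} [Ring A] (D : FormRingData A) {n : ℕ} (hn : 3 ≤ n)
    {K : AddSubgroup A} (Γ : AddSubgroup A) {i j : Idx n} (hij : i ≠ j) (hij' : i ≠ Idx.neg j)
    {a b : A} (hab : ∀ c, a * b * c ∈ K) (hba : ∀ c, b * a * c ∈ K)
    (hab' : ∀ c, c * (a * b) ∈ K) (hba' : ∀ c, c * (b * a) ∈ K)
    {x : GLn A n} (hx : x ∈ D.EUmax n) :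
    x * D.Y i j a b * x⁻¹ * (D.Y i j a b)⁻¹ ∈ D.EU n K Γ :=
  have hij₁ : i.1 ≠ j.1 := mt Idx.fst_eq_fst_iff.mp (not_or.mpr ⟨hij, hij'⟩)
  (D.EUmax_le_centralizerMod_Y hn hij₁ hab hba hab' hba' hx).2

/-- Lemma 6: short root elementary commutators `Y_{ij}(a,b)` are invariant
under conjugation by `EU(2n,A,Λ)` modulo `EU(2n,(I,Γ)∘(J,Δ))`. -/
theorem statement8 {A : Type*} [Ring A] (D : FormRingData A) (n : ℕ) (hn : 3 ≤ n)
    (FI FJ : FormIdeal D) (i j : Idx n) (hij : i ≠ j) (hij' : i ≠ Idx.neg j)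
    (a : A) (ha : a ∈ FI.I) (b : A) (hb : b ∈ FJ.I)
    (x : GLn A n) (hx : x ∈ D.EUmax n) :
    x * D.Y i j a b * x⁻¹ * (D.Y i j a b)⁻¹ ∈
      D.EUsym n FI.I FI.Gamma FJ.I FJ.Gamma := by
  refine statement8_general D hn _ hij hij' (fun c => ?_) (fun c => ?_) (fun c => ?_)
    (fun c => ?_) hx
  · simpa only [mul_assoc] using FormRingData.mul_mem_symI_left ha (FJ.mul_mem_right c b hb)
  · simpa only [mul_assoc] using FormRingData.mul_mem_symI_right (FI.mul_mem_right c a ha) hb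
  · simpa only [mul_assoc] using FormRingData.mul_mem_symI_left (FI.mul_mem_left c a ha) hb
  · simpa only [mul_assoc] using FormRingData.mul_mem_symI_right ha (FJ.mul_mem_left c b hb)
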